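/- Let m ≥ 1, τ > 0, K ∈ ℕ, let A_1, …, A_K ∈ M_m(ℝ), let d_1, …, d_K ∈ (0, τ], and let g : [0, τ] → M_m(ℝ) be continuous. Let h : ℝ → ℝᵐ be continuous and let x : ℝ → ℝᵐ be continuous satisfying, for all s ∈ ℝ: x(s) = Σ_{k=1}^K A_k x(s − d_k) + ∫_0^τ g(ν) x(s − ν) dν + h(s). Fix D > 0 and t ∈ ℝ, and suppose P : [t − D − τ, t] → ℝᵐ is continuous and satisfies: P(s) = x(s + D) for all s ∈ [t − D − τ, t − D], and P(s) = Σ_{k=1}^K A_k P(s − d_k) + ∫_0^τ g(ν) P(s − ν) dν + h(s + D) for all s ∈ (t − D, t]. Then P(s) = x(s + D) for all s ∈ [t − D − τ, t]. -/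

import Mathlib

/-!
The error `e s = P s - x (s + D)` is continuous, vanishes on `[t - D - τ, t - D]` and solves the
homogeneous equation `e s = ∑ A k e (s - d k) + ∫₀^τ g ν e (s - ν) dν` on `(t - D, t]`.
By the method of steps it vanishes up to `t`: let `C` bound the operators `g ν`, and let `δ > 0` be
at most `τ` and every `d k`, with `C * δ < 1`. If `e = 0` up to time `b`, then on `[b, b + δ]` the
delayed terms vanish, and only `ν ∈ [0, δ]` contributes to the integral. The maximum `M` of `‖e‖`
on that window therefore satisfies `M ≤ C * M * δ`, so `M = 0`
(`homogeneous_step`). Finitely many steps of the fixed length `δ` reach `t`.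
-/

open Matrix Set

lemma exists_mulVec_bound {m : ℕ} {τ : ℝ} {g : ℝ → Matrix (Fin m) (Fin m) ℝ}
    (hg : ContinuousOn g (Icc (0:ℝ) τ)) :
    ∃ C : ℝ, 0 ≤ C ∧ ∀ ν ∈ Icc (0:ℝ) τ, ∀ v : Fin m → ℝ, ‖g ν *ᵥ v‖ ≤ C * ‖v‖ := by
  have hφ : ContinuousOn (fun ν => ∑ i, ∑ j, |g ν i j|) (Icc (0:ℝ) τ) := by
    refine continuousOn_finsetSum _ fun i _ => continuousOn_finsetSum _ fun j _ => ?_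
    exact ((continuous_apply_apply i j).comp_continuousOn hg).abs
  obtain ⟨C, hC⟩ := isCompact_Icc.exists_bound_of_continuousOn hφ
  refine ⟨max C 0, le_max_right _ _, fun ν hν v => ?_⟩
  have h1 : ∑ i, ∑ j, |g ν i j| ≤ max C 0 :=
    (le_abs_self _).trans ((hC ν hν).trans (le_max_left _ _))
  refine (pi_norm_le_iff_of_nonneg (by positivity)).2 fun i => ?_
  calc ‖(g ν *ᵥ v) i‖ = ‖∑ j, g ν i j * v j‖ := rfl
    _ ≤ ∑ j, ‖g ν i j * v j‖ := norm_sum_le _ _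
    _ ≤ ∑ j, |g ν i j| * ‖v‖ := by
        refine Finset.sum_le_sum fun j _ => ?_
        rw [norm_mul, Real.norm_eq_abs]
        gcongr
        exact norm_le_pi_norm v j
    _ = (∑ j, |g ν i j|) * ‖v‖ := by rw [Finset.sum_mul]
    _ ≤ max C 0 * ‖v‖ := by
        gcongr
        refine le_trans ?_ h1
        exact Finset.single_le_sum (f := fun i => ∑ j, |g ν i j|)
          (fun i _ => Finset.sum_nonneg fun j _ => abs_nonneg _) (Finset.mem_univ i)

lemma continuousOn_mulVec_delay {m : ℕ} {τ a t : ℝ}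
    {g : ℝ → Matrix (Fin m) (Fin m) ℝ} (hg : ContinuousOn g (Icc (0:ℝ) τ))
    {e : ℝ → Fin m → ℝ} (he : ContinuousOn e (Icc (a - τ) t)) {s : ℝ} (hs : s ∈ Ioc a t) :
    ContinuousOn (fun ν => g ν *ᵥ e (s - ν)) (Icc (0:ℝ) τ) := by
  have h2 : ContinuousOn (fun ν => e (s - ν)) (Icc (0:ℝ) τ) :=
    he.comp (by fun_prop) fun ν hν => ⟨by linarith [hν.2, hs.1], by linarith [hν.1, hs.2]⟩
  exact (continuous_fst.matrix_mulVec continuous_snd).comp_continuousOn (hg.prodMk h2)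

/-- One step of the method of steps: vanishing up to `b` propagates to `b + δ`, provided `δ` does
not exceed any delay and `C * δ < 1`. -/
lemma homogeneous_step {m K : ℕ} {τ a t : ℝ}
    {A : Fin K → Matrix (Fin m) (Fin m) ℝ} {d : Fin K → ℝ} (hd : ∀ k, d k ∈ Ioc (0:ℝ) τ)
    {g : ℝ → Matrix (Fin m) (Fin m) ℝ} (hg : ContinuousOn g (Icc (0:ℝ) τ))
    {e : ℝ → Fin m → ℝ} (he : ContinuousOn e (Icc (a - τ) t))
    (heq : ∀ s ∈ Ioc a t,
      e s = (∑ k, A k *ᵥ e (s - d k)) + ∫ ν in (0:ℝ)..τ, g ν *ᵥ e (s - ν))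
    {C δ : ℝ} (hC0 : 0 ≤ C)
    (hC : ∀ ν ∈ Icc (0:ℝ) τ, ∀ v : Fin m → ℝ, ‖g ν *ᵥ v‖ ≤ C * ‖v‖)
    (hδ0 : 0 < δ) (hδτ : δ ≤ τ) (hδd : ∀ k, δ ≤ d k) (hCδ : C * δ < 1)
    {b : ℝ} (hab : a ≤ b) (hb : ∀ s ∈ Icc (a - τ) t, s ≤ b → e s = 0) :
    ∀ s ∈ Icc (a - τ) t, s ≤ b + δ → e s = 0 := by
  intro s hs hsb
  have hW : Icc (a - τ) (min (b + δ) t) ⊆ Icc (a - τ) t :=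
    Icc_subset_Icc_right (min_le_right _ _)
  have hsW : s ∈ Icc (a - τ) (min (b + δ) t) := ⟨hs.1, le_min hsb hs.2⟩
  obtain ⟨r, hr, hmax⟩ := isCompact_Icc.exists_isMaxOn ⟨s, hsW⟩ (he.mono hW).norm
  have hmax' : ∀ u ∈ Icc (a - τ) (min (b + δ) t), ‖e u‖ ≤ ‖e r‖ := fun u hu => hmax hu
  have hr0 : ‖e r‖ = 0 := by
    rcases le_or_gt r b with hrb | hrb
    · rw [hb r (hW hr) hrb, norm_zero]
    have hrI : r ∈ Ioc a t := ⟨by linarith, (hW hr).2⟩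
    have hrδ : r ≤ b + δ := hr.2.trans (min_le_left _ _)
    have hsum : ∑ k, A k *ᵥ e (r - d k) = 0 := by
      refine Finset.sum_eq_zero fun k _ => ?_
      rw [hb (r - d k) ⟨by linarith [(hd k).2, hrI.1], by linarith [(hd k).1, hrI.2]⟩
        (by linarith [hδd k]), mulVec_zero]
    have hcont := continuousOn_mulVec_delay hg he hrI
    have hi1 : IntervalIntegrable (fun ν => g ν *ᵥ e (r - ν)) MeasureTheory.volume 0 δ :=
      (hcont.mono (Icc_subset_Icc_right hδτ)).intervalIntegrable_of_Icc hδ0.le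
    have hi2 : IntervalIntegrable (fun ν => g ν *ᵥ e (r - ν)) MeasureTheory.volume δ τ :=
      (hcont.mono (Icc_subset_Icc_left hδ0.le)).intervalIntegrable_of_Icc hδτ
    have htail : ∫ ν in δ..τ, g ν *ᵥ e (r - ν) = 0 := by
      refine intervalIntegral.integral_zero_ae (Filter.Eventually.of_forall fun ν hν => ?_)
      rw [uIoc_of_le hδτ] at hν
      rw [hb (r - ν) ⟨by linarith [hν.2, hrI.1], by linarith [hν.1, hrI.2]⟩
        (by linarith [hν.1]), mulVec_zero]
    have hhead : ‖∫ ν in (0:ℝ)..δ, g ν *ᵥ e (r - ν)‖ ≤ C * ‖e r‖ * |δ - 0| := by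
      refine intervalIntegral.norm_integral_le_of_norm_le_const fun ν hν => ?_
      rw [uIoc_of_le hδ0.le] at hν
      refine (hC ν ⟨hν.1.le, hν.2.trans hδτ⟩ _).trans ?_
      gcongr
      exact hmax' _ ⟨by linarith [hν.2, hrI.1], by linarith [hν.1, hr.2]⟩
    have hle : ‖e r‖ ≤ C * ‖e r‖ * δ := by
      rw [sub_zero, abs_of_pos hδ0] at hhead
      have h3 := heq r hrI
      rw [hsum, zero_add, ← intervalIntegral.integral_add_adjacent_intervals hi1 hi2, htail,
        add_zero] at h3
      rwa [← h3] at hhead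
    nlinarith [norm_nonneg (e r)]
  exact norm_le_zero_iff.1 (hr0 ▸ hmax' s hsW)

/-- A continuous solution of the homogeneous equation with zero initial data vanishes. -/
lemma homogeneous_eq_zero {m K : ℕ} {τ a t : ℝ} (hτ : 0 < τ)
    {A : Fin K → Matrix (Fin m) (Fin m) ℝ} {d : Fin K → ℝ} (hd : ∀ k, d k ∈ Ioc (0:ℝ) τ)
    {g : ℝ → Matrix (Fin m) (Fin m) ℝ} (hg : ContinuousOn g (Icc (0:ℝ) τ))
    {e : ℝ → Fin m → ℝ} (he : ContinuousOn e (Icc (a - τ) t))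
    (hinit : ∀ s ∈ Icc (a - τ) a, e s = 0)
    (heq : ∀ s ∈ Ioc a t,
      e s = (∑ k, A k *ᵥ e (s - d k)) + ∫ ν in (0:ℝ)..τ, g ν *ᵥ e (s - ν)) :
    ∀ s ∈ Icc (a - τ) t, e s = 0 := by
  obtain ⟨C, hC0, hC⟩ := exists_mulVec_bound hg
  obtain ⟨δ, hδ0, hδτ, hδd, hCδ⟩ :
      ∃ δ : ℝ, 0 < δ ∧ δ ≤ τ ∧ (∀ k, δ ≤ d k) ∧ C * δ < 1 := by
    have small : ∀ c : ℝ, 0 < c → ∀ᶠ δ in nhdsWithin (0:ℝ) (Ioi 0), δ ≤ c := fun c hc =>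
      Filter.Eventually.filter_mono nhdsWithin_le_nhds (eventually_le_nhds hc)
    have h1 := small τ hτ
    have h2 : ∀ᶠ δ in nhdsWithin (0:ℝ) (Ioi 0), ∀ k, δ ≤ d k :=
      Filter.eventually_all.2 fun k => small _ (hd k).1
    have h3 := small (1 / (C + 1)) (by positivity)
    have h4 : ∀ᶠ δ in nhdsWithin (0:ℝ) (Ioi 0), 0 < δ := self_mem_nhdsWithin
    obtain ⟨δ, q1, q2, q3, q4⟩ := (h1.and (h2.and (h3.and h4))).exists
    refine ⟨δ, q4, q1, q2, ?_⟩
    rw [le_div_iff₀ (by positivity)] at q3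
    linarith
  have key : ∀ n : ℕ, ∀ s ∈ Icc (a - τ) t, s ≤ a + n * δ → e s = 0 := by
    intro n
    induction n with
    | zero => exact fun s hs hsa => hinit s ⟨hs.1, by simpa using hsa⟩
    | succ n ih =>
      intro s hs hsn
      refine homogeneous_step hd hg he heq hC0 hC hδ0 hδτ hδd hCδ
        (le_add_of_nonneg_right (by positivity)) ih s hs ?_
      push_cast at hsn
      linarith
  intro s hs
  obtain ⟨n, hn⟩ := exists_nat_ge ((s - a) / δ)
  rw [div_le_iff₀ hδ0] at hn
  exact key n s hs (by linarith)

/-- exactness of the state predictions of Property 3 of the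
paper. If `x` solves the forced integral difference equation (the time-delay
representation of a boundary trace) and the predictor `P` is initialized with
the exact `D`-shifted values of `x` on `[t−D−τ, t−D]` and satisfies the same
(shifted) equation on `(t−D, t]`, then `P(s) = x(s+D)` on all of `[t−D−τ, t]`. -/
theorem stmt11 (m : ℕ) (hm : 1 ≤ m) (τ : ℝ) (hτ : 0 < τ) (K : ℕ)
    (A : Fin K → Matrix (Fin m) (Fin m) ℝ)
    (d : Fin K → ℝ) (hd : ∀ k, d k ∈ Ioc (0:ℝ) τ)
    (g : ℝ → Matrix (Fin m) (Fin m) ℝ) (hg : ContinuousOn g (Icc (0:ℝ) τ))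
    (h : ℝ → Fin m → ℝ) (hh : Continuous h)
    (x : ℝ → Fin m → ℝ) (hx : Continuous x)
    (hxeq : ∀ s : ℝ,
      x s = (∑ k, A k *ᵥ x (s - d k)) + (∫ ν in (0:ℝ)..τ, g ν *ᵥ x (s - ν)) + h s)
    (D : ℝ) (hD : 0 < D) (t : ℝ)
    (P : ℝ → Fin m → ℝ) (hP : ContinuousOn P (Icc (t - D - τ) t))
    (hinit : ∀ s ∈ Icc (t - D - τ) (t - D), P s = x (s + D))
    (hPeq : ∀ s ∈ Ioc (t - D) t,
      P s = (∑ k, A k *ᵥ P (s - d k)) + (∫ ν in (0:ℝ)..τ, g ν *ᵥ P (s - ν))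
        + h (s + D)) :
    ∀ s ∈ Icc (t - D - τ) t, P s = x (s + D) := by
  have hxD : Continuous fun s => x (s + D) := by fun_prop
  have hmain := homogeneous_eq_zero (a := t - D) (t := t) (A := A) (g := g)
    (e := fun s => P s - x (s + D)) hτ hd hg (hP.sub hxD.continuousOn)
    (fun s hs => sub_eq_zero.2 (hinit s hs)) ?_
  · exact fun s hs => sub_eq_zero.1 (hmain s hs)
  intro s hs
  have hiP : IntervalIntegrable (fun ν => g ν *ᵥ P (s - ν)) MeasureTheory.volume 0 τ :=
    (continuousOn_mulVec_delay hg hP hs).intervalIntegrable_of_Icc hτ.le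
  have hix : IntervalIntegrable (fun ν => g ν *ᵥ x (s - ν + D)) MeasureTheory.volume 0 τ :=
    (continuousOn_mulVec_delay (e := fun s => x (s + D)) hg hxD.continuousOn
      hs).intervalIntegrable_of_Icc hτ.le
  have hx' := hxeq (s + D)
  simp only [add_sub_right_comm] at hx'
  simp only [mulVec_sub, Finset.sum_sub_distrib]
  rw [intervalIntegral.integral_sub hiP hix, hPeq s hs, hx']
  abel
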